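/- Every planar graph G admits a planar drawing in which the cycle bounding the outer face has no chords. -/

import Mathlib

open Set

universe u

/-- A topological embedding of a simple graph in the plane: vertices are mapped to
distinct points and every edge is realized by a simple arc joining the images of its
endpoints, such that two arcs of distinct edges meet only in common endpoints and no
vertex point lies in the interior of an arc. -/
structure PlaneEmbedding {V : Type u} (G : SimpleGraph V) where
  pos : V → ℝ × ℝ
  pos_inj : Function.Injective pos
  arc : ∀ ⦃u v : V⦄, G.Adj u v → Set (ℝ × ℝ)
  arc_symm : ∀ ⦃u v : V⦄ (h : G.Adj u v), arc h.symm = arc h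
  arc_curve : ∀ ⦃u v : V⦄ (h : G.Adj u v), ∃ f : ℝ → ℝ × ℝ,
    ContinuousOn f (Set.Icc 0 1) ∧ Set.InjOn f (Set.Icc 0 1) ∧
    f 0 = pos u ∧ f 1 = pos v ∧ f '' Set.Icc 0 1 = arc h
  arc_inter : ∀ ⦃u v w z : V⦄ (h₁ : G.Adj u v) (h₂ : G.Adj w z),
    s(u, v) ≠ s(w, z) → arc h₁ ∩ arc h₂ ⊆ ({pos u, pos v} ∩ {pos w, pos z} : Set (ℝ × ℝ))
  pos_arc : ∀ ⦃u v : V⦄ (h : G.Adj u v) (w : V), pos w ∈ arc h → w = u ∨ w = v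

/-- A graph is planar if it admits a topological embedding in the plane. -/
def SimpleGraph.IsPlanar {V : Type u} (G : SimpleGraph V) : Prop :=
  Nonempty (PlaneEmbedding G)

/-- The point set covered by a plane embedding. -/
def PlaneEmbedding.drawing {V : Type u} {G : SimpleGraph V} (E : PlaneEmbedding G) :
    Set (ℝ × ℝ) :=
  Set.range E.pos ∪ ⋃ (u : V) (v : V) (h : G.Adj u v), E.arc h

/-- A face of a plane embedding is a connected component of the complement of the drawing. -/
def PlaneEmbedding.IsFace {V : Type u} {G : SimpleGraph V} (E : PlaneEmbedding G)
    (F : Set (ℝ × ℝ)) : Prop :=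
  ∃ p, p ∉ E.drawing ∧ F = connectedComponentIn E.drawingᶜ p

/-- A vertex is incident to a face if its point lies on the boundary of the face. -/
def PlaneEmbedding.VertexOnFace {V : Type u} {G : SimpleGraph V} (E : PlaneEmbedding G)
    (v : V) (F : Set (ℝ × ℝ)) : Prop :=
  E.pos v ∈ closure F

/-- Maximum degree at most `d`. -/
def SimpleGraph.MaxDegreeLE {V : Type u} (G : SimpleGraph V) (d : ℕ) : Prop :=
  ∀ v : V, (G.neighborSet v).ncard ≤ d

/-- A graph is triconnected (3-connected) if it has more than three vertices, is
connected, and stays connected after removing any two vertices. -/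
def SimpleGraph.IsTriconnected {V : Type u} (G : SimpleGraph V) : Prop :=
  3 < Nat.card V ∧ G.Connected ∧
    ∀ u v : V, (G.induce {w : V | w ≠ u ∧ w ≠ v}).Connected

/-- A graph is biconnected (2-connected) if it has more than two vertices, is
connected, and stays connected after removing any single vertex. -/
def SimpleGraph.IsBiconnected {V : Type u} (G : SimpleGraph V) : Prop :=
  2 < Nat.card V ∧ G.Connected ∧ ∀ u : V, (G.induce {w : V | w ≠ u}).Connected

/-- A graph is subhamiltonian if it is a spanning subgraph of a planar hamiltonian graph. -/
def SimpleGraph.IsSubhamiltonian {V : Type u} [Fintype V] (G : SimpleGraph V) : Prop :=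
  ∃ H : SimpleGraph V, G ≤ H ∧ H.IsPlanar ∧ (letI := Classical.decEq V; H.IsHamiltonian)

/-- The graph consisting of the edges of the cyclic vertex sequence `σ`. -/
def cyclicSuccGraph {W : Type u} (σ : ZMod (Nat.card W) ≃ W) : SimpleGraph W :=
  SimpleGraph.fromRel fun u v => ∃ i, u = σ i ∧ v = σ (i + 1)

/-- The cyclic ordering `σ` of all vertices of `G` is a subhamiltonian cycle for `G` if
adding the edges between consecutive vertices of `σ` keeps the graph planar. -/
def SimpleGraph.IsSubhamiltonianCycle {W : Type u} (G : SimpleGraph W)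
    (σ : ZMod (Nat.card W) ≃ W) : Prop :=
  SimpleGraph.IsPlanar (G ⊔ cyclicSuccGraph σ)

/-- The edges (pairs of consecutive vertices) of the cyclic sequence `σ`. -/
def cycleEdges {W : Type u} (σ : ZMod (Nat.card W) ≃ W) : Set (Sym2 W) :=
  {e | ∃ i, e = s(σ i, σ (i + 1))}

/-- The subhamiltonian cycle `σ` crosses the face `F` at position `i` if the two
consecutive vertices `σ i` and `σ (i+1)` are both incident to `F` but not adjacent. -/
def CrossesFaceAt {V : Type u} {G : SimpleGraph V} (E : PlaneEmbedding G)
    (σ : ZMod (Nat.card V) ≃ V) (F : Set (ℝ × ℝ)) (i : ZMod (Nat.card V)) : Prop :=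
  E.VertexOnFace (σ i) F ∧ E.VertexOnFace (σ (i + 1)) F ∧ ¬ G.Adj (σ i) (σ (i + 1))

/-- A separating triangle: a triangle whose removal disconnects the graph. -/
def SimpleGraph.IsSepTriangle {V : Type u} (G : SimpleGraph V) (a b c : V) : Prop :=
  G.Adj a b ∧ G.Adj b c ∧ G.Adj a c ∧
    ¬ (G.induce {v : V | v ≠ a ∧ v ≠ b ∧ v ≠ c}).Connected

section Triangle

variable {V : Type u} {G : SimpleGraph V} (E : PlaneEmbedding G) {a b c : V}

/-- The Jordan curve formed by the drawing of the triangle `a b c`. -/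
def triangleDrawing (hab : G.Adj a b) (hbc : G.Adj b c) (hac : G.Adj a c) :
    Set (ℝ × ℝ) :=
  E.arc hab ∪ E.arc hbc ∪ E.arc hac

/-- The vertices strictly inside the triangle `a b c` (bounded side of the Jordan curve). -/
def insideTriangle (hab : G.Adj a b) (hbc : G.Adj b c) (hac : G.Adj a c) : Set V :=
  {v | v ≠ a ∧ v ≠ b ∧ v ≠ c ∧
    Bornology.IsBounded
      (connectedComponentIn (triangleDrawing E hab hbc hac)ᶜ (E.pos v))}

/-- The vertices strictly outside the triangle `a b c` (unbounded side of the Jordan curve). -/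
def outsideTriangle (hab : G.Adj a b) (hbc : G.Adj b c) (hac : G.Adj a c) : Set V :=
  {v | v ≠ a ∧ v ≠ b ∧ v ≠ c ∧
    ¬ Bornology.IsBounded
      (connectedComponentIn (triangleDrawing E hab hbc hac)ᶜ (E.pos v))}

end Triangle

/-- The point set covered by the drawing of the edges of a closed walk. -/
def cycleDrawing {V : Type u} {G : SimpleGraph V} (E : PlaneEmbedding G) {v0 : V}
    (w : G.Walk v0 v0) : Set (ℝ × ℝ) :=
  {p | ∃ (u v : V) (h : G.Adj u v), s(u, v) ∈ w.edges ∧ p ∈ E.arc h}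

/-! Consider all pairs of a chordless cycle `w` of a plane embedding and a component `D` of the
complement of its drawing `C`, and choose one for which `D` contains as few vertices as possible.
If `D` contained a vertex `x`, then by biconnectivity a shortest cycle through `x` inside `D ∪ C`
exists; it is chordless, and since its drawing misses a point of `C`, one component of the
complement of that drawing lies inside `D`. This component misses `x`, contradicting minimality.
So `D` contains no vertex. An edge meeting `D` would then join two vertices of `w`, which is
impossible as `w` is chordless; hence `D` is a face bounded by `w`. An inversion centred at a point
of `D` turns it into the outer face.

The facts needed about Jordan curves follow from Borsuk's criterion: a compact subset of the plane
on which every nonvanishing complex function has a continuous logarithm does not separate the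
plane. -/

section Logarithms

open Complex

variable {X Y : Type*} [TopologicalSpace X] [TopologicalSpace Y]

theorem exists_log_of_homotopy {S : Set X} {H : unitInterval → X → ℂ}
    (hH : ContinuousOn (Function.uncurry H) (univ ×ˢ S)) (hne : ∀ t, ∀ x ∈ S, H t x ≠ 0)
    {g₀ : X → ℂ} (hg₀ : ContinuousOn g₀ S) (hexp : ∀ x ∈ S, exp (g₀ x) = H 0 x) :
    ∃ g₁ : X → ℂ, ContinuousOn g₁ S ∧ ∀ x ∈ S, exp (g₁ x) = H 1 x := by
  let H' : C(unitInterval × S, {z : ℂ // z ≠ 0}) :=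
    { toFun := fun p ↦ ⟨H p.1 p.2, hne p.1 p.2 p.2.2⟩
      continuous_toFun := by
        refine Continuous.subtype_mk (hH.comp_continuous
          (continuous_fst.prodMk (continuous_subtype_val.comp continuous_snd)) fun p ↦ ?_) _
        exact ⟨trivial, p.2.2⟩ }
  have h0 : ∀ x : S, H' (0, x) = ⟨exp (S.domRestrict g₀ x), exp_ne_zero _⟩ :=
    fun x ↦ Subtype.ext (hexp x x.2).symm
  let L := isCoveringMap_exp.liftHomotopy H' ⟨S.domRestrict g₀, hg₀.domRestrict⟩ h0
  have hL : ∀ p, exp (L p) = H p.1 p.2 := fun p ↦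
    congrArg Subtype.val (congrFun (isCoveringMap_exp.liftHomotopy_lifts H' _ h0) p)
  let g₁ : X → ℂ := Function.extend Subtype.val (fun x : S ↦ L (1, x)) 0
  have hg₁ : ∀ x : S, g₁ x = L (1, x) := Subtype.val_injective.extend_apply _ _
  refine ⟨g₁, ?_, fun x hx ↦ ?_⟩
  · rw [continuousOn_iff_continuous_domRestrict]
    exact (L.continuous.comp (Continuous.prodMk_right 1)).congr fun x ↦ (hg₁ x).symm
  · rw [hg₁ ⟨x, hx⟩, hL]

theorem exists_add_const_of_exp_eq {S : Set X} (hS : IsPreconnected S)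
    {f g : X → ℂ} (hf : ContinuousOn f S) (hg : ContinuousOn g S)
    (hfg : ∀ x ∈ S, exp (f x) = exp (g x)) :
    ∃ c, exp c = 1 ∧ ∀ x ∈ S, f x = g x + c := by
  rcases S.eq_empty_or_nonempty with rfl | ⟨a, ha⟩
  · exact ⟨0, exp_zero, fun x hx ↦ hx.elim⟩
  have hc : exp (f a - g a) = 1 := by rw [exp_sub, hfg a ha, div_self (exp_ne_zero _)]
  refine ⟨f a - g a, hc, fun x hx ↦ isCoveringMap_exp.eqOn_of_comp_eqOn hS hf
    (hg.add continuousOn_const) (fun y hy ↦ Subtype.ext ?_) ha (by simp) hx⟩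
  simp [exp_add, hc, hfg y hy]

theorem not_exists_log_sub_on_sphere (a : ℂ) {R : ℝ} (hR : 0 < R) :
    ¬ ∃ g : ℂ → ℂ, ContinuousOn g (Metric.sphere a R) ∧
      ∀ z ∈ Metric.sphere a R, exp (g z) = z - a := by
  rintro ⟨g, hg, hexp⟩
  have hmem : ∀ θ, circleMap a R θ ∈ Metric.sphere a R := circleMap_mem_sphere a hR.le
  obtain ⟨c, -, hc⟩ := exists_add_const_of_exp_eq isPreconnected_univ
    (f := fun θ : ℝ ↦ g (circleMap a R θ)) (g := fun θ ↦ Real.log R + θ * I)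
    (hg.comp (continuous_circleMap a R).continuousOn fun θ _ ↦ hmem θ) (by fun_prop)
    fun θ _ ↦ by
      rw [hexp _ (hmem θ), exp_add, ← ofReal_exp, Real.exp_log hR, circleMap_sub_center,
        circleMap_zero]
  have hperiod : g (circleMap a R (2 * Real.pi)) = g (circleMap a R 0) := by
    congr 1; simpa using periodic_circleMap a R 0
  have h2πI : (2 * Real.pi : ℂ) * I = 0 := by
    have := (hc _ trivial).symm.trans (hperiod.trans (hc 0 trivial))
    push_cast at this
    linear_combination this
  exact two_pi_I_ne_zero h2πI

/-- A set has continuous logarithms if every nonvanishing complex function continuous on it is the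
exponential of a function continuous on it. For compact sets of the plane this is the substitute
for "does not separate the plane" that is stable under the gluing of arcs. -/
def HasContinuousLogs (K : Set X) : Prop :=
  ∀ f : X → ℂ, ContinuousOn f K → (∀ x ∈ K, f x ≠ 0) →
    ∃ g : X → ℂ, ContinuousOn g K ∧ ∀ x ∈ K, exp (g x) = f x

theorem hasContinuousLogs_of_starConvex {E : Type*} [AddCommGroup E] [Module ℝ E]
    [TopologicalSpace E] [IsTopologicalAddGroup E] [ContinuousSMul ℝ E] {a : E} {S : Set E}
    (hS : StarConvex ℝ a S) (ha : a ∈ S) : HasContinuousLogs S := by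
  intro f hf hne
  have hmaps : ∀ t : unitInterval, ∀ x ∈ S, a + (t : ℝ) • (x - a) ∈ S := fun t x hx ↦ by
    simpa [smul_sub] using hS.add_smul_sub_mem hx t.2.1 t.2.2
  obtain ⟨g, hg, hexp⟩ := exists_log_of_homotopy (S := S)
    (H := fun t x ↦ f (a + (t : ℝ) • (x - a))) (g₀ := fun _ ↦ log (f a))
    (hf.comp (by fun_prop) fun p hp ↦ hmaps p.1 p.2 hp.2)
    (fun t x hx ↦ hne _ (hmaps t x hx)) continuousOn_const fun x _ ↦ by
      simp [exp_log (hne a ha)]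
  exact ⟨g, hg, fun x hx ↦ by simpa using hexp x hx⟩

theorem HasContinuousLogs.image [T2Space Y] {K : Set X} (hlog : HasContinuousLogs K)
    (hK : IsCompact K) {φ : X → Y} (hφ : ContinuousOn φ K) (hinj : InjOn φ K) :
    HasContinuousLogs (φ '' K) := by
  intro f hf hne
  obtain ⟨g, hg, hexp⟩ := hlog (f ∘ φ) (hf.comp hφ (mapsTo_image φ K))
    fun x hx ↦ hne _ (mem_image_of_mem φ hx)
  have : CompactSpace K := isCompact_iff_compactSpace.1 hK
  have hemb : Topology.IsClosedEmbedding (K.domRestrict φ) :=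
    hφ.domRestrict.isClosedEmbedding (injOn_iff_injective.1 hinj)
  let g' : Y → ℂ := Function.extend (K.domRestrict φ) (K.domRestrict g) 0
  have hg' : ∀ x : K, g' (φ x) = g x := hemb.injective.extend_apply _ _
  refine ⟨g', ?_, ?_⟩
  · rw [← range_domRestrict, ← image_univ, hemb.isInducing.continuousOn_image_iff,
      continuousOn_univ]
    exact hg.domRestrict.congr fun x ↦ (hg' x).symm
  · rintro _ ⟨x, hx, rfl⟩
    rw [hg' ⟨x, hx⟩]; exact hexp x hx

theorem HasContinuousLogs.union {A B : Set X} (hA : HasContinuousLogs A)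
    (hB : HasContinuousLogs B) (hAc : IsClosed A) (hBc : IsClosed B) {c : X}
    (hAB : A ∩ B = {c}) : HasContinuousLogs (A ∪ B) := by
  intro f hf hne
  obtain ⟨hcA, hcB⟩ : c ∈ A ∩ B := hAB ▸ mem_singleton c
  obtain ⟨g, hg, hexp⟩ := hA f (hf.mono subset_union_left) fun x hx ↦ hne x (.inl hx)
  obtain ⟨g', hg', hexp'⟩ := hB f (hf.mono subset_union_right) fun x hx ↦ hne x (.inr hx)
  have hd : exp (g c - g' c) = 1 := by
    rw [exp_sub, hexp c hcA, hexp' c hcB, div_self (hne c (.inl hcA))]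
  classical
  let F : X → ℂ := fun x ↦ if x ∈ A then g x else g' x + (g c - g' c)
  have hFA : EqOn F g A := fun x hx ↦ if_pos hx
  have hFB : EqOn F (fun x ↦ g' x + (g c - g' c)) B := by
    intro x hx
    by_cases h : x ∈ A
    · obtain rfl : x = c := hAB.subset ⟨h, hx⟩
      simp [hFA h]
    · exact if_neg h
  refine ⟨F, (hg.congr hFA).union_of_isClosed ((hg'.add continuousOn_const).congr hFB) hAc hBc, ?_⟩
  rintro x (hx | hx)
  · rw [hFA hx, hexp x hx]
  · rw [hFB hx, exp_add, hd, mul_one, hexp' x hx]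

theorem hasContinuousLogs_image_Icc [T2Space X] {f : ℝ → X} {s t : ℝ} (hst : s ≤ t)
    (hf : ContinuousOn f (Icc s t)) (hinj : InjOn f (Icc s t)) :
    HasContinuousLogs (f '' Icc s t) :=
  (hasContinuousLogs_of_starConvex ((convex_Icc s t).starConvex (left_mem_Icc.2 hst))
    (left_mem_Icc.2 hst)).image isCompact_Icc hf hinj

end Logarithms

section Regions

variable {X : Type*} [TopologicalSpace X] {C D K S : Set X}

/-- `D` is a region of `C` if it is a connected component of the complement of `C`. The faces of a
plane embedding are the regions of its drawing. -/
def IsRegion (C D : Set X) : Prop :=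
  ∃ p, p ∉ C ∧ D = connectedComponentIn Cᶜ p

theorem isRegion_connectedComponentIn {p : X} (hp : p ∉ C) :
    IsRegion C (connectedComponentIn Cᶜ p) :=
  ⟨p, hp, rfl⟩

namespace IsRegion

theorem isPreconnected (hD : IsRegion C D) : IsPreconnected D := by
  obtain ⟨p, -, rfl⟩ := hD
  exact isPreconnected_connectedComponentIn

theorem nonempty (hD : IsRegion C D) : D.Nonempty := by
  obtain ⟨p, hp, rfl⟩ := hD
  exact ⟨p, mem_connectedComponentIn hp⟩

theorem subset_compl (hD : IsRegion C D) : D ⊆ Cᶜ := by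
  obtain ⟨p, -, rfl⟩ := hD
  exact connectedComponentIn_subset _ _

theorem subset_of_isPreconnected (hD : IsRegion C D) (hS : IsPreconnected S) (hSC : S ⊆ Cᶜ)
    (hSD : (S ∩ D).Nonempty) : S ⊆ D := by
  obtain ⟨p, -, rfl⟩ := hD
  obtain ⟨x, hxS, hxD⟩ := hSD
  rw [connectedComponentIn_eq hxD]
  exact hS.subset_connectedComponentIn hxS hSC

theorem eq_of_nonempty_inter {D' : Set X} (hD : IsRegion C D) (hD' : IsRegion C D')
    (h : (D ∩ D').Nonempty) : D = D' :=
  (hD'.subset_of_isPreconnected hD.isPreconnected hD.subset_compl h).antisymm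
    (hD.subset_of_isPreconnected hD'.isPreconnected hD'.subset_compl (inter_comm D D' ▸ h))

theorem of_frontier_subset (hDo : IsOpen D) (hDc : IsPreconnected D) (hne : D.Nonempty)
    (hDC : D ⊆ Cᶜ) (hfr : frontier D ⊆ C) : IsRegion C D := by
  obtain ⟨p, hp⟩ := hne
  refine ⟨p, hDC hp, (hDc.subset_connectedComponentIn hp hDC).antisymm ?_⟩
  refine isPreconnected_connectedComponentIn.subset_of_closure_inter_subset hDo
    ⟨p, mem_connectedComponentIn (hDC hp), hp⟩ fun x ⟨hxD, hxC⟩ ↦ ?_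
  by_contra h
  exact connectedComponentIn_subset _ _ hxC (hfr (hDo.frontier_eq ▸ ⟨hxD, h⟩))

variable [LocallyConnectedSpace X]

theorem isOpen (hD : IsRegion C D) (hC : IsClosed C) : IsOpen D := by
  obtain ⟨p, -, rfl⟩ := hD
  exact hC.isOpen_compl.connectedComponentIn

theorem closure_subset (hD : IsRegion C D) (hC : IsClosed C) : closure D ⊆ D ∪ C := by
  intro x hx
  by_contra! hxDC
  obtain ⟨hxD, hxC⟩ := not_or.1 hxDC
  have hx' := isRegion_connectedComponentIn hxC
  obtain ⟨y, hy⟩ := mem_closure_iff.1 hx _ (hx'.isOpen hC) (mem_connectedComponentIn hxC)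
  exact hxD (hx'.eq_of_nonempty_inter hD ⟨y, hy⟩ ▸ mem_connectedComponentIn hxC)

theorem frontier_subset (hD : IsRegion C D) (hC : IsClosed C) : frontier D ⊆ C := by
  rw [(hD.isOpen hC).frontier_eq, sdiff_subset_iff]
  exact hD.closure_subset hC

theorem not_frontier_subset_of_isPreconnected_compl (hD : IsRegion C D) (hC : IsClosed C)
    (hK : IsPreconnected Kᶜ) (hKC : K ⊂ C) : ¬ frontier D ⊆ K := by
  intro hfr
  have hDK : IsRegion K D := .of_frontier_subset (hD.isOpen hC) hD.isPreconnected hD.nonempty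
    (hD.subset_compl.trans (compl_subset_compl.2 hKC.subset)) hfr
  obtain ⟨x, hxC, hxK⟩ := exists_of_ssubset hKC
  refine hD.subset_compl (hDK.subset_of_isPreconnected hK Subset.rfl ?_ hxK) hxC
  rw [inter_eq_right.2 hDK.subset_compl]
  exact hDK.nonempty

end IsRegion

theorem isPreconnected_compl_of_forall_region (hS : S.Nonempty)
    (h : ∀ D, IsRegion C D → S ⊆ D) : IsPreconnected Cᶜ := by
  obtain ⟨x, hx⟩ := hS
  exact isPreconnected_of_forall x fun y hy ↦ ⟨connectedComponentIn Cᶜ y,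
    connectedComponentIn_subset _ _, h _ (isRegion_connectedComponentIn hy) hx,
    mem_connectedComponentIn hy, isPreconnected_connectedComponentIn⟩

theorem exists_region_notMem (hC : ¬ IsPreconnected Cᶜ) (x : X) : ∃ D, IsRegion C D ∧ x ∉ D := by
  by_contra! h
  exact hC (isPreconnected_compl_of_forall_region (singleton_nonempty x)
    fun D hD ↦ singleton_subset_iff.2 (h D hD))

/-- A closed set that separates the space and is the entire boundary of each of its regions, as
the Jordan curve theorem asserts of simple closed curves in the plane. -/
structure IsJordanSeparating (C : Set X) : Prop where
  isClosed : IsClosed C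
  not_isPreconnected_compl : ¬ IsPreconnected Cᶜ
  frontier_eq : ∀ D, IsRegion C D → frontier D = C

namespace IsJordanSeparating

theorem exists_region (hC : IsJordanSeparating C) : ∃ D, IsRegion C D := by
  have hne : Cᶜ.Nonempty := by
    by_contra! h
    exact hC.not_isPreconnected_compl (h ▸ isPreconnected_empty)
  exact hne.imp' _ fun _ ↦ isRegion_connectedComponentIn

theorem exists_region_ne (hC : IsJordanSeparating C) (hD : IsRegion C D) :
    ∃ Y, IsRegion C Y ∧ Disjoint Y D := by
  obtain ⟨x, hx⟩ := hD.nonempty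
  obtain ⟨Y, hY, hxY⟩ := exists_region_notMem hC.not_isPreconnected_compl x
  refine ⟨Y, hY, ?_⟩
  by_contra h
  exact hxY (hY.eq_of_nonempty_inter hD (not_disjoint_iff_nonempty_inter.1 h) ▸ hx)

-- Each region `Y ≠ D` of `C` accumulates at every point of `C \ K`, and `K` misses `Y`; so
-- `C \ K` connects all the `Y` to each other.
theorem isPreconnected_compl_sdiff (hC : IsJordanSeparating C) (hD : IsRegion C D)
    (hKDC : K ⊆ D ∪ C) (hCK : (C \ K).Nonempty) : IsPreconnected (Dᶜ \ K) := by
  obtain ⟨c, hcC, hcK⟩ := hCK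
  have hYK : ∀ Y, IsRegion C Y → Disjoint Y D →
      Y ∪ C \ K ⊆ Dᶜ \ K ∧ IsPreconnected (Y ∪ C \ K) := by
    refine fun Y hY hYD ↦ ⟨union_subset (fun y hy ↦ ⟨hYD.notMem_of_mem_left hy, fun hyK ↦ ?_⟩)
      (sdiff_subset_sdiff_left fun x hx hxD ↦ hD.subset_compl hxD hx), ?_⟩
    · exact (hKDC hyK).elim (hYD.notMem_of_mem_left hy) (hY.subset_compl hy)
    · refine hY.isPreconnected.subset_closure subset_union_left
        (union_subset subset_closure (sdiff_subset.trans ?_))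
      exact (hC.frontier_eq Y hY).symm.subset.trans frontier_subset_closure
  refine isPreconnected_of_forall c fun y ⟨hyD, hyK⟩ ↦ ?_
  obtain ⟨Y, hY, hYD, hyY⟩ : ∃ Y, IsRegion C Y ∧ Disjoint Y D ∧ y ∈ Y ∪ C \ K := by
    by_cases hyC : y ∈ C
    · obtain ⟨Y, hY, hYD⟩ := hC.exists_region_ne hD
      exact ⟨Y, hY, hYD, .inr ⟨hyC, hyK⟩⟩
    · have hY := isRegion_connectedComponentIn hyC
      refine ⟨_, hY, ?_, .inl (mem_connectedComponentIn hyC)⟩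
      by_contra h
      exact hyD (hY.eq_of_nonempty_inter hD (not_disjoint_iff_nonempty_inter.1 h) ▸
        mem_connectedComponentIn hyC)
  exact ⟨_, (hYK Y hY hYD).1, .inr ⟨hcC, hcK⟩, hyY, (hYK Y hY hYD).2⟩

theorem exists_region_subset (hC : IsJordanSeparating C) (hD : IsRegion C D)
    (hK : ¬ IsPreconnected Kᶜ) (hKDC : K ⊆ D ∪ C) (hCK : (C \ K).Nonempty) :
    ∃ D', IsRegion K D' ∧ D' ⊆ D := by
  have hpre := hC.isPreconnected_compl_sdiff hD hKDC hCK
  obtain ⟨c, hcC, hcK⟩ := hCK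
  obtain ⟨D', hD', hcD'⟩ := exists_region_notMem hK c
  refine ⟨D', hD', fun p hp ↦ ?_⟩
  by_contra hpD
  exact hcD' (hD'.subset_of_isPreconnected hpre (fun x hx ↦ hx.2)
    ⟨p, ⟨hpD, hD'.subset_compl hp⟩, hp⟩ ⟨fun h ↦ hD.subset_compl h hcC, hcK⟩)

theorem eq_of_subset [LocallyConnectedSpace X] (hC : IsJordanSeparating C)
    (hK : IsJordanSeparating K) (hCK : C ⊆ K) : C = K := by
  have hcover : ∀ Y p, IsRegion C Y → p ∈ Y → p ∉ K → K ⊆ Y ∪ C := by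
    intro Y p hY hpY hpK
    have hD := isRegion_connectedComponentIn hpK
    have hDY : connectedComponentIn Kᶜ p ⊆ Y := hY.subset_of_isPreconnected hD.isPreconnected
      (hD.subset_compl.trans (compl_subset_compl.2 hCK)) ⟨p, mem_connectedComponentIn hpK, hpY⟩
    calc K = frontier (connectedComponentIn Kᶜ p) := (hK.frontier_eq _ hD).symm
      _ ⊆ closure Y := frontier_subset_closure.trans (closure_mono hDY)
      _ ⊆ Y ∪ C := hY.closure_subset hC.isClosed
  obtain ⟨D, hD⟩ := hK.exists_region
  obtain ⟨p, hp⟩ := hD.nonempty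
  have hpK := hD.subset_compl hp
  have hpC : p ∉ C := fun h ↦ hpK (hCK h)
  have hY := isRegion_connectedComponentIn hpC
  have hKY := hcover _ p hY (mem_connectedComponentIn hpC) hpK
  obtain ⟨Y', hY', hdisj⟩ := hC.exists_region_ne hY
  obtain ⟨q, hq⟩ := hY'.nonempty
  have hqK : q ∉ K := fun h ↦
    (hKY h).elim (disjoint_left.1 hdisj hq) (hY'.subset_compl hq)
  have hKY' := hcover Y' q hY' hq hqK
  exact hCK.antisymm fun k hk ↦ (hKY hk).elim
    (fun hkY ↦ (hKY' hk).resolve_left (disjoint_right.1 hdisj hkY)) id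

end IsJordanSeparating

end Regions

section PuncturedRegions

variable {E : Type*} [NormedAddCommGroup E] [NormedSpace ℝ E]

theorem isPreconnected_preimage_dist (hE : 1 < Module.rank ℝ E) (c : E) {s : Set ℝ}
    (hs : s.OrdConnected) : IsPreconnected {x : E | dist x c ∈ s} := by
  have : Nontrivial E := rank_pos_iff_nontrivial.1 (zero_lt_one.trans hE)
  have hpolar : {x : E | dist x c ∈ s} =
      (fun p : ℝ × E ↦ c + p.1 • p.2) '' ((s ∩ Ici 0) ×ˢ Metric.sphere 0 1) := by
    ext x
    constructor
    · intro hx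
      rcases eq_or_ne x c with rfl | hne
      · obtain ⟨v, hv⟩ := NormedSpace.sphere_nonempty (x := (0 : E)).2 zero_le_one
        exact ⟨(0, v), ⟨⟨by simpa using hx, le_refl (0 : ℝ)⟩, hv⟩, by simp⟩
      · have hn : ‖x - c‖ ≠ 0 := norm_ne_zero_iff.2 (sub_ne_zero.2 hne)
        refine ⟨(‖x - c‖, ‖x - c‖⁻¹ • (x - c)), ⟨⟨dist_eq_norm x c ▸ hx, norm_nonneg _⟩, ?_⟩, ?_⟩
        · simp [norm_smul, hn]
        · simp [smul_smul, hn]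
    · rintro ⟨⟨r, v⟩, ⟨⟨hrs, hr⟩, hv⟩, rfl⟩
      have hv : ‖v‖ = 1 := by simpa using hv
      simpa [norm_smul, hv, abs_of_nonneg (mem_Ici.1 hr)] using hrs
  rw [hpolar]
  exact ((hs.inter ordConnected_Ici).isPreconnected.prod (isPreconnected_sphere hE 0 1)).image _
    (by fun_prop)

theorem isPreconnected_sdiff_singleton (hE : 1 < Module.rank ℝ E) {D : Set E} (hDo : IsOpen D)
    (hD : IsPreconnected D) (p : E) : IsPreconnected (D \ {p}) := by
  by_cases hp : p ∈ D
  swap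
  · rwa [sdiff_singleton_eq_self hp]
  have : Nontrivial E := rank_pos_iff_nontrivial.1 (zero_lt_one.trans hE)
  obtain ⟨ε, hε, hball⟩ := Metric.isOpen_iff.1 hDo p hp
  have hsub : {x | dist x p ∈ Ioo 0 ε} ⊆ (D \ {p})ᶜᶜ := fun x hx ↦ by
    rw [compl_compl]
    exact ⟨hball hx.2, dist_pos.1 hx.1⟩
  obtain ⟨x, hx⟩ : {x | dist x p ∈ Ioo 0 ε}.Nonempty := by
    obtain ⟨x, hx⟩ := NormedSpace.sphere_nonempty (x := p).2 (half_pos hε).le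
    exact ⟨x, by rw [mem_ofPred, Metric.mem_sphere.1 hx]; exact ⟨half_pos hε, half_lt_self hε⟩⟩
  rw [← compl_compl (D \ {p})]
  refine isPreconnected_compl_of_forall_region ⟨x, hx⟩ fun U hU ↦
    hU.subset_of_isPreconnected (isPreconnected_preimage_dist hE p ordConnected_Ioo) hsub ?_
  have hclosed : IsClosed (D \ {p})ᶜ := (hDo.sdiff isClosed_singleton).isClosed_compl
  have hUD : U ⊆ D \ {p} := compl_compl (D \ {p}) ▸ hU.subset_compl
  have hpU : p ∈ closure U := by
    by_contra hpU
    refine (hUD (hD.subset_of_closure_inter_subset (hU.isOpen hclosed) ?_ ?_ hp)).2 rfl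
    · exact hU.nonempty.mono fun x hx ↦ ⟨(hUD hx).1, hx⟩
    · rintro y ⟨hyU, hyD⟩
      refine (hU.closure_subset hclosed hyU).resolve_right (· ⟨hyD, ?_⟩)
      rintro rfl
      exact hpU hyU
  obtain ⟨y, hyU, hy⟩ := Metric.mem_closure_iff.1 hpU ε hε
  exact ⟨y, ⟨dist_pos.2 (hUD hyU).2, dist_comm p y ▸ hy⟩, hyU⟩

end PuncturedRegions

section PlaneSeparation

open Complex

theorem HasContinuousLogs.not_isBounded_region {K D : Set ℂ} (hlog : HasContinuousLogs K)
    (hK : IsClosed K) (hD : IsRegion K D) : ¬ Bornology.IsBounded D := by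
  intro hbdd
  obtain ⟨p, hp⟩ := hD.nonempty
  obtain ⟨g, hg, hexp⟩ := hlog (· - p) (by fun_prop)
    fun x hx h ↦ hD.subset_compl hp (sub_eq_zero.1 h ▸ hx)
  obtain ⟨G, hG⟩ := ContinuousMap.exists_restrict_eq hK ⟨K.domRestrict g, hg.domRestrict⟩
  have hGg : ∀ x ∈ K, G x = g x := fun x hx ↦ DFunLike.congr_fun hG ⟨x, hx⟩
  classical
  let F : ℂ → ℂ := fun z ↦ if z ∈ D then exp (G z) else z - p
  have hF : Continuous F := by
    refine Continuous.if (fun z hz ↦ ?_) (by fun_prop) (by fun_prop)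
    have hzK := hD.frontier_subset hK hz
    rw [hGg z hzK, hexp z hzK]
  have hF0 : ∀ z, F z ≠ 0 := by
    intro z
    by_cases hz : z ∈ D
    · simp only [F, if_pos hz]; exact exp_ne_zero _
    · simp only [F, if_neg hz]; exact sub_ne_zero.2 fun h ↦ hz (h ▸ hp)
  obtain ⟨L, hL, hexpL⟩ := hasContinuousLogs_of_starConvex (starConvex_univ p) (mem_univ p) F
    hF.continuousOn fun z _ ↦ hF0 z
  obtain ⟨R, hR⟩ := hbdd.subset_ball p
  refine not_exists_log_sub_on_sphere p (by simpa using hR hp)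
    ⟨L, hL.mono (subset_univ _), fun z hz ↦ ?_⟩
  have hzD : z ∉ D := fun h ↦ (Metric.mem_ball.1 (hR h)).ne (Metric.mem_sphere.1 hz)
  simp [hexpL z trivial, F, hzD]

theorem HasContinuousLogs.isPreconnected_compl_complex {K : Set ℂ} (hlog : HasContinuousLogs K)
    (hK : IsCompact K) : IsPreconnected Kᶜ := by
  obtain ⟨R, hR⟩ := hK.isBounded.subset_closedBall (0 : ℂ)
  have hfar : {z : ℂ | dist z 0 ∈ Ioi R} = (Metric.closedBall 0 R)ᶜ := by
    ext z; simp
  have hfar_pre : IsPreconnected (Metric.closedBall (0 : ℂ) R)ᶜ :=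
    hfar ▸ isPreconnected_preimage_dist (by simp [rank_real_complex]) 0 ordConnected_Ioi
  have hunbdd : ∀ D : Set ℂ, ¬ Bornology.IsBounded D → ((Metric.closedBall 0 R)ᶜ ∩ D).Nonempty := by
    intro D hD
    by_contra! h
    exact hD (Metric.isBounded_closedBall.subset
      (disjoint_compl_left_iff_subset.1 (disjoint_iff_inter_eq_empty.2 h)))
  refine isPreconnected_compl_of_forall_region ?_ fun D hD ↦ hD.subset_of_isPreconnected hfar_pre
    (compl_subset_compl.2 hR) (hunbdd D (hlog.not_isBounded_region hK.isClosed hD))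
  exact (hunbdd univ (NormedSpace.unbounded_univ ℝ ℂ)).left

theorem HasContinuousLogs.isPreconnected_compl {K : Set (ℝ × ℝ)} (hlog : HasContinuousLogs K)
    (hK : IsCompact K) : IsPreconnected Kᶜ := by
  let e : ℝ × ℝ ≃ₜ ℂ := equivRealProdCLM.symm.toHomeomorph
  have h := (hlog.image hK e.continuous.continuousOn e.injective.injOn).isPreconnected_compl_complex
    (hK.image e.continuous)
  rwa [← image_compl_eq e.bijective, e.isPreconnected_image] at h

theorem exists_log_div_of_joinedIn {a b : ℂ} {A : Set ℂ} (hA : JoinedIn A a b) :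
    ∃ g : ℂ → ℂ, ContinuousOn g Aᶜ ∧ ∀ z ∈ Aᶜ, exp (g z) = (z - b) / (z - a) := by
  obtain ⟨γ, hγ⟩ := hA
  have hne : ∀ t, ∀ z ∈ Aᶜ, z - γ t ≠ 0 := fun t z hz h ↦ hz (sub_eq_zero.1 h ▸ hγ t)
  have hne_a : ∀ z ∈ Aᶜ, z - a ≠ 0 := fun z hz ↦ by simpa using hne 0 z hz
  obtain ⟨g, hg, hexp⟩ := exists_log_of_homotopy (S := Aᶜ)
    (H := fun t z ↦ (z - γ t) / (z - a)) (g₀ := fun _ ↦ 0)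
    (ContinuousOn.div (by fun_prop) (by fun_prop) fun p hp ↦ hne_a _ hp.2)
    (fun t z hz ↦ div_ne_zero (hne t z hz) (hne_a z hz)) continuousOn_const
    fun z hz ↦ by simp [div_self (hne_a z hz)]
  exact ⟨g, hg, fun z hz ↦ by simpa using hexp z hz⟩

theorem not_exists_log_div {a b : ℂ} (hab : a ≠ b) :
    ¬ ∃ g : ℂ → ℂ, ContinuousOn g {a, b}ᶜ ∧ ∀ z ∈ ({a, b} : Set ℂ)ᶜ,
      exp (g z) = (z - b) / (z - a) := by
  rintro ⟨g, hg, hexp⟩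
  have hab' : a - b ≠ 0 := sub_ne_zero.2 hab
  have hr : 0 < ‖a - b‖ / 2 := half_pos (norm_pos_iff.2 hab')
  have hsphere : ∀ z ∈ Metric.sphere a (‖a - b‖ / 2), z ∈ ({a, b} : Set ℂ)ᶜ := by
    rintro z hz (rfl | rfl)
    · exact hr.ne (by simpa using hz)
    · rw [Metric.mem_sphere, dist_comm, dist_eq_norm] at hz
      linarith
  have hslit : ∀ z ∈ Metric.sphere a (‖a - b‖ / 2), 1 + (z - a) / (a - b) ∈ slitPlane := by
    intro z hz
    refine mem_slitPlane_of_norm_lt_one ?_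
    rw [norm_div, mem_sphere_iff_norm.1 hz, div_div_cancel_left' (norm_ne_zero_iff.2 hab')]
    norm_num
  -- `z - b` has a logarithm on the disc of radius `‖a - b‖` around `a`; subtract `g` from it.
  refine not_exists_log_sub_on_sphere a hr
    ⟨fun z ↦ log (a - b) + log (1 + (z - a) / (a - b)) - g z, ?_, fun z hz ↦ ?_⟩
  · exact (continuousOn_const.add (ContinuousOn.clog (by fun_prop) hslit)).sub (hg.mono hsphere)
  · have hza : z - a ≠ 0 := sub_ne_zero.2 fun h ↦ hsphere z hz (.inl h)
    have hzb : z - b ≠ 0 := sub_ne_zero.2 fun h ↦ hsphere z hz (.inr h)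
    rw [exp_sub, exp_add, exp_log hab', exp_log (slitPlane_ne_zero (hslit z hz)),
      hexp z (hsphere z hz)]
    field_simp
    ring

theorem not_isPreconnected_compl_union_complex {a b : ℂ} (hab : a ≠ b) {A B : Set ℂ}
    (hA : IsClosed A) (hB : IsClosed B) (hjA : JoinedIn A a b) (hjB : JoinedIn B a b)
    (hAB : A ∩ B ⊆ {a, b}) : ¬ IsPreconnected (A ∪ B)ᶜ := by
  intro hpre
  obtain ⟨g, hg, hexp⟩ := exists_log_div_of_joinedIn hjA
  obtain ⟨g', hg', hexp'⟩ := exists_log_div_of_joinedIn hjB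
  rw [compl_union] at hpre
  obtain ⟨c, hc, hgg'⟩ := exists_add_const_of_exp_eq hpre (hg.mono inter_subset_left)
    (hg'.mono inter_subset_right) fun z hz ↦ by rw [hexp z hz.1, hexp' z hz.2]
  classical
  let F : ℂ → ℂ := fun z ↦ if z ∈ A then g' z + c else g z
  have hFA : EqOn F g Aᶜ := fun z hz ↦ if_neg hz
  have hFB : EqOn F (fun z ↦ g' z + c) Bᶜ := by
    intro z hz
    by_cases h : z ∈ A
    · exact if_pos h
    · rw [hFA h, hgg' z ⟨h, hz⟩]
  have hsub : ({a, b} : Set ℂ)ᶜ ⊆ Aᶜ ∪ Bᶜ := by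
    rw [← compl_inter]; exact compl_subset_compl.2 hAB
  refine not_exists_log_div hab ⟨F, ?_, fun z hz ↦ ?_⟩
  · exact ((hg.congr hFA).union_of_isOpen ((hg'.add continuousOn_const).congr hFB)
      hA.isOpen_compl hB.isOpen_compl).mono hsub
  · rcases hsub hz with h | h
    · rw [hFA h, hexp z h]
    · rw [hFB h, exp_add, hc, mul_one, hexp' z h]

theorem not_isPreconnected_compl_union {a b : ℝ × ℝ} (hab : a ≠ b) {A B : Set (ℝ × ℝ)}
    (hA : IsClosed A) (hB : IsClosed B) (hjA : JoinedIn A a b) (hjB : JoinedIn B a b)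
    (hAB : A ∩ B ⊆ {a, b}) : ¬ IsPreconnected (A ∪ B)ᶜ := by
  let e : ℝ × ℝ ≃ₜ ℂ := equivRealProdCLM.symm.toHomeomorph
  rw [← e.isPreconnected_image, image_compl_eq e.bijective, image_union]
  refine not_isPreconnected_compl_union_complex (e.injective.ne hab) (e.isClosed_image.2 hA)
    (e.isClosed_image.2 hB) (hjA.map e.continuous) (hjB.map e.continuous) ?_
  rw [← image_inter e.injective, ← image_pair]
  exact image_mono hAB

section BrokenCurve

variable {f : ℝ → ℝ × ℝ} {B D : Set (ℝ × ℝ)}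

theorem isPreconnected_compl_union_broken_arc (hf : ContinuousOn f (Icc 0 1))
    (hinj : InjOn f (Icc 0 1)) (hB : IsCompact B) (hlog : HasContinuousLogs B) (h0 : f 0 ∈ B)
    (h1 : f 1 ∈ B) (hfB : ∀ t ∈ Ioo (0 : ℝ) 1, f t ∉ B) {s t : ℝ} (hs : 0 < s) (hst : s < t)
    (ht : t < 1) : IsPreconnected (B ∪ f '' Icc 0 s ∪ f '' Icc t 1)ᶜ := by
  have hs_sub : Icc 0 s ⊆ Icc (0 : ℝ) 1 := Icc_subset_Icc le_rfl (hst.trans ht).le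
  have ht_sub : Icc t 1 ⊆ Icc (0 : ℝ) 1 := Icc_subset_Icc (hs.trans hst).le le_rfl
  have hcs : IsCompact (f '' Icc 0 s) := isCompact_Icc.image_of_continuousOn (hf.mono hs_sub)
  have hct : IsCompact (f '' Icc t 1) := isCompact_Icc.image_of_continuousOn (hf.mono ht_sub)
  have hends : ∀ r ∈ Icc (0 : ℝ) 1, f r ∈ B → r = 0 ∨ r = 1 := fun r hr hrB ↦ by
    by_contra! h
    exact hfB r ⟨hr.1.lt_of_ne' h.1, hr.2.lt_of_ne h.2⟩ hrB
  have hlog_s : HasContinuousLogs (B ∪ f '' Icc 0 s) := by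
    refine hlog.union (hasContinuousLogs_image_Icc hs.le (hf.mono hs_sub) (hinj.mono hs_sub))
      hB.isClosed hcs.isClosed (c := f 0) (Subset.antisymm ?_ ?_)
    · rintro _ ⟨hrB, r, hr, rfl⟩
      rcases hends r (hs_sub hr) hrB with rfl | rfl
      · rfl
      · exact absurd hr.2 (hst.trans ht).not_ge
    · exact singleton_subset_iff.2 ⟨h0, mem_image_of_mem f (left_mem_Icc.2 hs.le)⟩
  have hlog_st : HasContinuousLogs (B ∪ f '' Icc 0 s ∪ f '' Icc t 1) := by
    refine hlog_s.union (hasContinuousLogs_image_Icc ht.le (hf.mono ht_sub) (hinj.mono ht_sub))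
      (hB.union hcs).isClosed hct.isClosed (c := f 1) (Subset.antisymm ?_ ?_)
    · rintro _ ⟨hrB | ⟨r', hr', heq⟩, r, hr, rfl⟩
      · rcases hends r (ht_sub hr) hrB with rfl | rfl
        · exact absurd hr.1 (hs.trans hst).not_ge
        · rfl
      · obtain rfl := hinj (hs_sub hr') (ht_sub hr) heq
        exact absurd (hr.1.trans hr'.2) hst.not_ge
    · exact singleton_subset_iff.2 ⟨.inl h1, mem_image_of_mem f (right_mem_Icc.2 ht.le)⟩
  exact hlog_st.isPreconnected_compl ((hB.union hcs).union hct)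

theorem image_Icc_subset_frontier_region (hf : ContinuousOn f (Icc 0 1))
    (hinj : InjOn f (Icc 0 1)) (hB : IsCompact B) (hlog : HasContinuousLogs B) (h0 : f 0 ∈ B)
    (h1 : f 1 ∈ B) (hfB : ∀ t ∈ Ioo (0 : ℝ) 1, f t ∉ B)
    (hD : IsRegion (f '' Icc 0 1 ∪ B) D) : f '' Icc 0 1 ⊆ frontier D := by
  have hC : IsClosed (f '' Icc 0 1 ∪ B) :=
    ((isCompact_Icc.image_of_continuousOn hf).union hB).isClosed
  suffices h : MapsTo f (Ioo 0 1) (frontier D) by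
    rw [← closure_Ioo zero_ne_one] at hf ⊢
    exact (h.closure_of_continuousOn hf).image_subset.trans isClosed_frontier.closure_eq.subset
  intro r hr
  by_contra hrD
  have hgap : Ioo 0 1 ∩ f ⁻¹' (frontier D)ᶜ ∈ nhds r :=
    ((hf.mono Ioo_subset_Icc_self).isOpen_inter_preimage isOpen_Ioo
      isClosed_frontier.isOpen_compl).mem_nhds ⟨hr, hrD⟩
  obtain ⟨ε, hε, hgap⟩ := Metric.nhds_basis_closedBall.mem_iff.1 hgap
  rw [Real.closedBall_eq_Icc] at hgap
  have hs : 0 < r - ε := (hgap ⟨le_rfl, by linarith⟩).1.1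
  have ht : r + ε < 1 := (hgap ⟨by linarith, le_rfl⟩).1.2
  have hrI := Ioo_subset_Icc_self hr
  refine hD.not_frontier_subset_of_isPreconnected_compl hC (isPreconnected_compl_union_broken_arc
    hf hinj hB hlog h0 h1 hfB hs (by linarith) ht) (ssubset_iff_exists.2
      ⟨?_, f r, .inl (mem_image_of_mem f hrI), ?_⟩) fun x hx ↦ ?_
  · exact union_subset (union_subset subset_union_right
      (subset_union_of_subset_left (image_mono (Icc_subset_Icc le_rfl (by linarith))) _))
      (subset_union_of_subset_left (image_mono (Icc_subset_Icc (by linarith) le_rfl)) _)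
  · rintro ((hrB | ⟨t, ⟨h0t, htr⟩, heq⟩) | ⟨t, ⟨hrt, ht1⟩, heq⟩)
    · exact hfB r hr hrB
    · have := hinj ⟨h0t, by linarith⟩ hrI heq
      linarith
    · have := hinj ⟨by linarith, ht1⟩ hrI heq
      linarith
  · rcases hD.frontier_subset hC hx with ⟨t, ht, rfl⟩ | hxB
    · have hgap_t : ¬ (r - ε ≤ t ∧ t ≤ r + ε) := fun h ↦ (hgap h).2 hx
      rcases not_and_or.1 hgap_t with h | h
      · exact .inl (.inr ⟨t, ⟨ht.1, (not_le.1 h).le⟩, rfl⟩)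
      · exact .inr ⟨t, ⟨(not_le.1 h).le, ht.2⟩, rfl⟩
    · exact .inl (.inl hxB)

end BrokenCurve

end PlaneSeparation

section Inversion

variable {E : Type*} [NormedAddCommGroup E] [NormedSpace ℝ E] {p x : E} {C D : Set E}

/-- Inversion in the unit sphere around `p`, for an arbitrary norm; it exchanges the two sides of
that sphere and fixes `p` because `0⁻¹ = 0`. -/
noncomputable def unitInversion (p x : E) : E :=
  p + (‖x - p‖ ^ 2)⁻¹ • (x - p)

theorem dist_unitInversion (p x : E) : dist (unitInversion p x) p = (dist x p)⁻¹ := by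
  rcases eq_or_ne x p with rfl | hx
  · simp [unitInversion]
  · have h : ‖x - p‖ ≠ 0 := norm_ne_zero_iff.2 (sub_ne_zero.2 hx)
    simp only [unitInversion, dist_eq_norm, add_sub_cancel_left, norm_smul, norm_inv, norm_pow,
      norm_norm]
    field_simp

theorem unitInversion_involutive (p : E) : Function.Involutive (unitInversion p) := by
  intro x
  rcases eq_or_ne x p with rfl | hx
  · simp [unitInversion]
  · have h : ‖x - p‖ ≠ 0 := norm_ne_zero_iff.2 (sub_ne_zero.2 hx)
    have hnorm : ‖unitInversion p x - p‖ = ‖x - p‖⁻¹ := by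
      simpa only [dist_eq_norm] using dist_unitInversion p x
    rw [unitInversion, hnorm, unitInversion, add_sub_cancel_left, smul_smul,
      inv_pow, inv_inv, mul_inv_cancel₀ (pow_ne_zero 2 h), one_smul, add_sub_cancel]

theorem unitInversion_ne (h : x ≠ p) : unitInversion p x ≠ p := by
  simpa [← dist_pos, dist_unitInversion] using h

theorem continuousOn_unitInversion (p : E) : ContinuousOn (unitInversion p) {p}ᶜ := by
  refine continuousOn_const.add (ContinuousOn.smul (.inv₀ (by fun_prop) fun x hx ↦ ?_)
    (by fun_prop))
  exact pow_ne_zero 2 (norm_ne_zero_iff.2 (sub_ne_zero.2 hx))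

/-- The inversion around `p` as a homeomorphism of the complement of `p` with itself. -/
noncomputable def unitInversionHomeomorph (p : E) : OpenPartialHomeomorph E E where
  toFun := unitInversion p
  invFun := unitInversion p
  source := {p}ᶜ
  target := {p}ᶜ
  map_source' _ := unitInversion_ne
  map_target' _ := unitInversion_ne
  left_inv' x _ := unitInversion_involutive p x
  right_inv' x _ := unitInversion_involutive p x
  open_source := isOpen_compl_singleton
  open_target := isOpen_compl_singleton
  continuousOn_toFun := continuousOn_unitInversion p
  continuousOn_invFun := continuousOn_unitInversion p

theorem notMem_closure_image_unitInversion (hb : Bornology.IsBounded D) :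
    p ∉ closure (unitInversion p '' (D \ {p})) := by
  obtain ⟨R, hR, hDR⟩ := hb.subset_closedBall_lt 0 p
  have hfar : unitInversion p '' (D \ {p}) ⊆ {y | R⁻¹ ≤ dist y p} := by
    rintro _ ⟨x, ⟨hxD, hxp⟩, rfl⟩
    rw [mem_ofPred_eq, dist_unitInversion]
    exact inv_anti₀ (dist_pos.2 hxp) (hDR hxD)
  intro hp
  have := closure_minimal hfar (isClosed_le (by fun_prop) (by fun_prop)) hp
  rw [mem_ofPred_eq, dist_self] at this
  exact this.not_gt (inv_pos.2 hR)

theorem frontier_image_unitInversion (hDo : IsOpen D) (hb : Bornology.IsBounded D) (hp : p ∈ D) :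
    frontier (unitInversion p '' (D \ {p})) = unitInversion p '' frontier D := by
  have himage : (unitInversionHomeomorph p).IsImage D (unitInversion p '' (D \ {p})) :=
    fun x hx ↦ (unitInversion_involutive p).injective.mem_set_image.trans (and_iff_left hx)
  ext y
  rw [show unitInversion p '' frontier D = unitInversion p ⁻¹' frontier D from
    congrFun (unitInversion_involutive p).image_eq_preimage_symm _, mem_preimage]
  rcases eq_or_ne y p with rfl | hy
  · have hfix : unitInversion y y = y := by simp [unitInversion]
    rw [hfix]
    exact iff_of_false (fun h ↦ notMem_closure_image_unitInversion hb (frontier_subset_closure h))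
      fun h ↦ hDo.inter_frontier_eq.subset ⟨hp, h⟩
  · have := himage.frontier (unitInversion_ne hy)
    rwa [show unitInversionHomeomorph p (unitInversion p y) = y from
      unitInversion_involutive p y] at this

theorem not_isBounded_image_unitInversion [Nontrivial E] (hD : D ∈ nhds p) :
    ¬ Bornology.IsBounded (unitInversion p '' (D \ {p})) := by
  intro hb
  obtain ⟨R, hR⟩ := hb.subset_closedBall p
  have := Module.punctured_nhds_neBot ℝ E p
  have hlarge : ∀ᶠ x in nhdsWithin p {p}ᶜ, R < (dist x p)⁻¹ := by
    simp only [dist_eq_norm]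
    exact (tendsto_norm_sub_self_nhdsNE p).inv_tendsto_nhdsGT_zero.eventually_gt_atTop R
  obtain ⟨x, hRx, hxD, hxp⟩ :=
    (hlarge.and (Filter.inter_mem (mem_nhdsWithin_of_mem_nhds hD) self_mem_nhdsWithin)).exists
  have := hR (mem_image_of_mem _ ⟨hxD, hxp⟩)
  rw [Metric.mem_closedBall, dist_unitInversion] at this
  exact this.not_gt hRx

theorem IsRegion.image_unitInversion (hE : 1 < Module.rank ℝ E) (hD : IsRegion C D)
    (hC : IsClosed C) (hb : Bornology.IsBounded D) (hp : p ∈ D) :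
    IsRegion (unitInversion p '' C) (unitInversion p '' (D \ {p})) := by
  have : Nontrivial E := rank_pos_iff_nontrivial.1 (zero_lt_one.trans hE)
  have hDo := hD.isOpen hC
  refine .of_frontier_subset ?_ ?_ ?_ ?_ ?_
  · exact (unitInversionHomeomorph p).isOpen_image_of_subset_source
      (hDo.sdiff isClosed_singleton) fun x hx ↦ hx.2
  · exact (isPreconnected_sdiff_singleton hE hDo hD.isPreconnected p).image _
      ((continuousOn_unitInversion p).mono fun x hx ↦ hx.2)
  · by_contra! h
    exact not_isBounded_image_unitInversion (hDo.mem_nhds hp) (h ▸ Bornology.isBounded_empty)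
  · rw [← image_compl_eq (unitInversion_involutive p).bijective]
    exact image_mono (sdiff_subset.trans hD.subset_compl)
  · rw [frontier_image_unitInversion hDo hb hp]
    exact image_mono (hD.frontier_subset hC)

end Inversion

section ChordlessCycles

open SimpleGraph

variable {V : Type u} {G : SimpleGraph V} {a b u v x : V}

theorem exists_isPath_of_mem_edges_of_isCycle {w : G.Walk x x} (hw : w.IsCycle)
    (he : s(u, v) ∈ w.edges) :
    ∃ q : G.Walk v u, q.IsPath ∧ s(u, v) ∉ q.edges ∧
      ∀ e, e ∈ w.edges ↔ e = s(u, v) ∨ e ∈ q.edges := by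
  classical
  have hu := w.fst_mem_support_of_mem_edges he
  have hrot : ∀ e, e ∈ (w.rotate u hu).edges ↔ e ∈ w.edges :=
    fun e ↦ (w.rotate_edges u hu).mem_iff
  obtain ⟨c, hc, hcv, hedges⟩ : ∃ c : G.Walk u u, c.IsCycle ∧ v = c.snd ∧
      ∀ e, e ∈ c.edges ↔ e ∈ w.edges := by
    have hc := hw.rotate hu
    have hv : v ∈ (w.rotate u hu).toSubgraph.neighborSet u := by
      simpa only [Subgraph.mem_neighborSet, Walk.adj_toSubgraph_iff_mem_edges, hrot] using he
    rw [hc.neighborSet_toSubgraph_endpoint] at hv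
    rcases hv with hv | hv
    · exact ⟨_, hc, hv, hrot⟩
    · exact ⟨_, hc.reverse, (Walk.snd_reverse _ ▸ hv :), fun e ↦ by simp [hrot]⟩
  subst hcv
  have hcons := c.cons_tail_eq hc.not_nil
  rw [← hcons] at hc hedges
  obtain ⟨hpath, hnot⟩ := (Walk.cons_isCycle_iff ..).1 hc
  refine ⟨c.tail, hpath, hnot, fun e ↦ ?_⟩
  rw [← hedges, Walk.edges_cons, List.mem_cons]

theorem one_lt_length_of_notMem_edges {p : G.Walk a b} (hab : a ≠ b) (hp : s(a, b) ∉ p.edges) :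
    1 < p.length := by
  cases p with
  | nil => exact absurd rfl hab
  | cons h p =>
    cases p with
    | nil => simp at hp
    | cons h' p => simp

theorem exists_isCycle_length_lt_of_isPath {p : G.Walk a b} {q : G.Walk b a} (hpath : p.IsPath)
    (hba : G.Adj b a) (hp : s(b, a) ∉ p.edges) (hq : s(b, a) ∉ q.edges) (hx : x ∈ p.support) :
    ∃ w : G.Walk x x, w.IsCycle ∧ w.length < p.length + q.length := by
  classical
  have hx' : x ∈ (p.cons hba).support := List.mem_cons_of_mem _ hx
  refine ⟨(p.cons hba).rotate x hx', ((Walk.cons_isCycle_iff p hba).2 ⟨hpath, hp⟩).rotate hx', ?_⟩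
  rw [Walk.length_rotate, Walk.length_cons]
  exact add_lt_add_right (one_lt_length_of_notMem_edges hba.ne hq) _

theorem exists_isCycle_length_lt_of_not_isChordless {w : G.Walk x x} (hw : w.IsCycle)
    (hchord : ¬ w.IsChordless) : ∃ w' : G.Walk x x, w'.IsCycle ∧ w'.length < w.length := by
  classical
  rw [Walk.isChordless_iff_forall_mem_edges] at hchord
  push Not at hchord
  obtain ⟨a, b, ha, hb, hab, hne⟩ := hchord
  have hc := hw.rotate ha
  have hb' : b ∈ (w.rotate a ha).support := (w.mem_support_rotate_iff a ha).2 hb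
  have hx : x ∈ (w.rotate a ha).support := (w.mem_support_rotate_iff a ha).2 w.start_mem_support
  rw [← w.length_rotate a ha]
  rw [← (w.rotate_edges a ha).mem_iff] at hne
  obtain ⟨p, q, hpq⟩ : ∃ (p : G.Walk a b) (q : G.Walk b a), w.rotate a ha = p.append q :=
    ⟨_, _, (Walk.take_spec _ hb').symm⟩
  rw [hpq] at hc hx hne ⊢
  rw [Walk.edges_append, List.mem_append, not_or] at hne
  rw [Walk.length_append]
  rcases Walk.mem_support_append_iff .. |>.1 hx with hx | hx
  · have hp := hc.isPath_of_append_left (Walk.not_nil_of_ne hab.ne')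
    rw [Sym2.eq_swap] at hne
    exact exists_isCycle_length_lt_of_isPath hp hab.symm hne.1 hne.2 hx
  · have hq := hc.isPath_of_append_right (Walk.not_nil_of_ne hab.ne)
    rw [add_comm]
    exact exists_isCycle_length_lt_of_isPath hq hab hne.2 hne.1 hx

theorem exists_isCycle_isChordless (h : ∃ w : G.Walk x x, w.IsCycle) :
    ∃ w : G.Walk x x, w.IsCycle ∧ w.IsChordless := by
  obtain ⟨w, hw, hmin⟩ := exists_minimalFor_of_wellFoundedLT
    (fun w : G.Walk x x ↦ w.IsCycle) Walk.length h
  refine ⟨w, hw, ?_⟩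
  by_contra hchord
  obtain ⟨w', hw', hlt⟩ := exists_isCycle_length_lt_of_not_isChordless hw hchord
  exact hlt.not_ge (hmin hw' hlt.le)

theorem isChordless_map_embedding {W : Type*} {H : SimpleGraph W} (φ : G ↪g H) {w : G.Walk u v}
    (hw : w.IsChordless) : (w.map φ.toHom).IsChordless := by
  rw [Walk.isChordless_iff_forall_mem_edges]
  intro a b ha hb hab
  rw [Walk.support_map, List.mem_map] at ha hb
  obtain ⟨a, ha, rfl⟩ := ha
  obtain ⟨b, hb, rfl⟩ := hb
  rw [Walk.edges_map]
  exact List.mem_map_of_mem (hw.mem_edges ha hb (φ.map_adj_iff.1 hab))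

theorem exists_isCycle_of_preconnected_induce {S : Set V} (hx : x ∈ S) (hu : u ∈ S) (hv : v ∈ S)
    (hxu : G.Adj x u) (hxv : G.Adj x v) (huv : u ≠ v)
    (hS : (G.induce (S ∩ {a | a ≠ x})).Preconnected) :
    ∃ w : (G.induce S).Walk ⟨x, hx⟩ ⟨x, hx⟩, w.IsCycle := by
  classical
  let x' : S := ⟨x, hx⟩
  let u' : S := ⟨u, hu⟩
  let v' : S := ⟨v, hv⟩
  let φ : G.induce (S ∩ {a | a ≠ x}) →g (G.induce S).deleteEdges {s(x', u')} :=
    { toFun := fun a ↦ ⟨a, a.2.1⟩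
      map_rel' := fun {a b} hab ↦ by
        refine deleteEdges_adj.2 ⟨hab, fun he ↦ ?_⟩
        rcases Sym2.eq_iff.1 he with ⟨h, -⟩ | ⟨-, h⟩
        · exact a.2.2 (congrArg Subtype.val h)
        · exact b.2.2 (congrArg Subtype.val h) }
  have hvu : ((G.induce S).deleteEdges {s(x', u')}).Reachable v' u' :=
    (hS ⟨v, hv, hxv.ne'⟩ ⟨u, hu, hxu.ne'⟩).map φ
  have hxu' : (G.induce S).Adj x' u' := hxu
  have hxv' : ((G.induce S).deleteEdges {s(x', u')}).Adj x' v' := by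
    refine deleteEdges_adj.2 ⟨hxv, fun he ↦ ?_⟩
    exact huv (congrArg Subtype.val (Sym2.congr_right.1 he)).symm
  obtain ⟨c, w, hw, he⟩ := adj_and_reachable_delete_edges_iff_exists_cycle.1
    ⟨hxu', hxv'.reachable.trans hvu⟩
  exact ⟨_, hw.rotate (w.fst_mem_support_of_mem_edges he)⟩

theorem exists_isCycle_isChordless_of_preconnected_induce {S : Set V} (hx : x ∈ S) (hu : u ∈ S)
    (hv : v ∈ S) (hxu : G.Adj x u) (hxv : G.Adj x v) (huv : u ≠ v)
    (hS : (G.induce (S ∩ {a | a ≠ x})).Preconnected) :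
    ∃ w : G.Walk x x, w.IsCycle ∧ w.IsChordless ∧ ∀ a ∈ w.support, a ∈ S := by
  obtain ⟨w, hw, hchord⟩ := exists_isCycle_isChordless
    (exists_isCycle_of_preconnected_induce hx hu hv hxu hxv huv hS)
  refine ⟨w.map (Embedding.induce S).toHom, hw.map Subtype.val_injective,
    isChordless_map_embedding _ hchord, fun a ha ↦ ?_⟩
  have ha' : a ∈ w.support.map (Embedding.induce S).toHom :=
    (congrArg (a ∈ ·) (Walk.support_map _ w)).mp ha
  obtain ⟨b, -, rfl⟩ := List.mem_map.1 ha'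
  exact b.2

theorem preconnected_induce_inter {S T U : Set V} (hTS : T ⊆ S) (hTU : T ⊆ U)
    (hT : (G.induce T).Connected) (hU : (G.induce U).Preconnected)
    (hadj : ∀ a ∈ S \ T, ∀ b, G.Adj a b → b ∈ S) : (G.induce (S ∩ U)).Preconnected := by
  obtain ⟨t⟩ := hT.nonempty
  let t' : ↑(S ∩ U) := ⟨t, hTS t.2, hTU t.2⟩
  have hT' : ∀ a (ha : a ∈ T), (G.induce (S ∩ U)).Reachable ⟨a, hTS ha, hTU ha⟩ t' :=
    fun a ha ↦ (hT.preconnected ⟨a, ha⟩ t).map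
      (induceHomOfLE G (subset_inter hTS hTU)).toHom
  have hreach : ∀ {a b : U} (_ : (G.induce U).Walk a b), b.1 ∈ T → ∀ ha : a.1 ∈ S,
      (G.induce (S ∩ U)).Reachable ⟨a, ha, a.2⟩ t' := by
    intro a b r hb
    induction r with
    | nil => exact fun _ ↦ hT' _ hb
    | @cons a c b hac _ ih =>
      intro ha
      by_cases haT : a.1 ∈ T
      · exact hT' _ haT
      · have hc := hadj a ⟨ha, haT⟩ c hac
        have hac' : (G.induce (S ∩ U)).Adj ⟨a, ha, a.2⟩ ⟨c, hc, c.2⟩ := hac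
        exact hac'.reachable.trans (ih hb hc)
  have hall : ∀ a : ↑(S ∩ U), (G.induce (S ∩ U)).Reachable a t' := by
    rintro ⟨a, haS, haU⟩
    obtain ⟨r⟩ := hU ⟨a, haU⟩ ⟨t, hTU t.2⟩
    exact hreach r t.2 haS
  exact fun a b ↦ (hall a).trans (hall b).symm

theorem exists_adj_adj_ne_of_isBiconnected (hG : G.IsBiconnected) (x : V) :
    ∃ u v, u ≠ v ∧ G.Adj x u ∧ G.Adj x v := by
  obtain ⟨hcard, hconn, hdel⟩ := hG
  have : Finite V := Nat.finite_of_card_ne_zero (by lia)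
  have : Nontrivial V := Finite.one_lt_card_iff_nontrivial.1 (by lia)
  obtain ⟨u, hxu⟩ := hconn.preconnected.exists_adj_of_nontrivial x
  have : Nontrivial {a | a ≠ u} := by
    refine Finite.one_lt_card_iff_nontrivial.1 ?_
    have := Set.ncard_add_ncard_compl {u}
    rw [Nat.card_coe_set_eq, show {a | a ≠ u} = {u}ᶜ from rfl]
    rw [ncard_singleton] at this
    lia
  obtain ⟨v, hxv⟩ := (hdel u).preconnected.exists_adj_of_nontrivial ⟨x, hxu.ne⟩
  exact ⟨u, v, v.2.symm, hxu, hxv⟩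

end ChordlessCycles

namespace PlaneEmbedding

open SimpleGraph

variable {V : Type u} {G : SimpleGraph V} (E : PlaneEmbedding G) {a b u v v₀ : V}

section Arcs

theorem isCompact_arc (h : G.Adj u v) : IsCompact (E.arc h) := by
  obtain ⟨f, hf, -, -, -, himage⟩ := E.arc_curve h
  exact himage ▸ isCompact_Icc.image_of_continuousOn hf

theorem left_mem_arc (h : G.Adj u v) : E.pos u ∈ E.arc h := by
  obtain ⟨f, -, -, h0, -, himage⟩ := E.arc_curve h
  exact himage ▸ ⟨0, unitInterval.zero_mem, h0⟩

theorem right_mem_arc (h : G.Adj u v) : E.pos v ∈ E.arc h :=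
  E.arc_symm h ▸ E.left_mem_arc h.symm

theorem arc_eq_of_sym2_eq (h : G.Adj u v) (h' : G.Adj a b) (he : s(a, b) = s(u, v)) :
    E.arc h' = E.arc h := by
  rcases Sym2.eq_iff.1 he with ⟨rfl, rfl⟩ | ⟨rfl, rfl⟩
  · rfl
  · exact E.arc_symm h

theorem joinedIn_arc (h : G.Adj u v) : JoinedIn (E.arc h) (E.pos u) (E.pos v) := by
  have hpath : IsPathConnected (E.arc h) := by
    obtain ⟨f, hf, -, -, -, himage⟩ := E.arc_curve h
    exact himage ▸ ((convex_Icc 0 1).isPathConnected ⟨0, unitInterval.zero_mem⟩).image' hf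
  exact hpath.joinedIn _ (E.left_mem_arc h) _ (E.right_mem_arc h)

theorem hasContinuousLogs_arc (h : G.Adj u v) : HasContinuousLogs (E.arc h) := by
  obtain ⟨f, hf, hinj, -, -, himage⟩ := E.arc_curve h
  exact himage ▸ hasContinuousLogs_image_Icc zero_le_one hf hinj

theorem exists_curve_interior (h : G.Adj u v) : ∃ f : ℝ → ℝ × ℝ, ContinuousOn f (Icc 0 1) ∧
    f '' Icc 0 1 = E.arc h ∧ f '' Ioo 0 1 = E.arc h \ {E.pos u, E.pos v} := by
  obtain ⟨f, hf, hinj, h0, h1, himage⟩ := E.arc_curve h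
  refine ⟨f, hf, himage, ?_⟩
  rw [← Icc_sdiff_both, hinj.image_sdiff_subset, image_pair, himage, h0, h1]
  exact pair_subset unitInterval.zero_mem unitInterval.one_mem

theorem isPreconnected_arc_sdiff (h : G.Adj u v) :
    IsPreconnected (E.arc h \ {E.pos u, E.pos v}) := by
  obtain ⟨f, hf, -, hinterior⟩ := E.exists_curve_interior h
  exact hinterior ▸ isPreconnected_Ioo.image f (hf.mono Ioo_subset_Icc_self)

theorem arc_subset_closure_sdiff (h : G.Adj u v) :
    E.arc h ⊆ closure (E.arc h \ {E.pos u, E.pos v}) := by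
  obtain ⟨f, hf, himage, hinterior⟩ := E.exists_curve_interior h
  rw [← hinterior, ← himage]
  rw [← closure_Ioo (zero_ne_one' ℝ)] at hf ⊢
  exact hf.image_closure

end Arcs

section Drawing

theorem mem_drawing_of_mem_arc (h : G.Adj u v) {x : ℝ × ℝ} (hx : x ∈ E.arc h) :
    x ∈ E.drawing :=
  .inr (mem_iUnion₂.2 ⟨u, v, mem_iUnion.2 ⟨h, hx⟩⟩)

theorem isClosed_drawing [Finite V] : IsClosed E.drawing := by
  refine (finite_range E.pos).isClosed.union ?_
  exact isClosed_iUnion_of_finite fun u ↦ isClosed_iUnion_of_finite fun v ↦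
    isClosed_iUnion_of_finite fun h ↦ (E.isCompact_arc h).isClosed

theorem cycleDrawing_subset_drawing (w : G.Walk v₀ v₀) : cycleDrawing E w ⊆ E.drawing := by
  rintro x ⟨u, v, h, -, hx⟩
  exact E.mem_drawing_of_mem_arc h hx

end Drawing

section Map

variable (φ : ℝ × ℝ → ℝ × ℝ) (hφ : Function.Injective φ) (hφE : ContinuousOn φ E.drawing)

/-- The image of a plane embedding under an injective map that is continuous on its drawing. -/
def map : PlaneEmbedding G where
  pos v := φ (E.pos v)
  pos_inj := hφ.comp E.pos_inj
  arc _ _ h := φ '' E.arc h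
  arc_symm _ _ h := by rw [E.arc_symm h]
  arc_curve u v h := by
    obtain ⟨f, hf, hinj, h0, h1, himage⟩ := E.arc_curve h
    refine ⟨φ ∘ f, hφE.comp hf fun t ht ↦ ?_, hφ.comp_injOn hinj, congrArg φ h0, congrArg φ h1,
      by rw [image_comp, himage]⟩
    exact E.mem_drawing_of_mem_arc h (himage ▸ mem_image_of_mem f ht)
  arc_inter u v w z h₁ h₂ hne := by
    simpa only [image_inter hφ, image_pair] using image_mono (f := φ) (E.arc_inter h₁ h₂ hne)
  pos_arc u v h w hw := E.pos_arc h w (hφ.mem_set_image.1 hw)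

theorem drawing_map : (E.map φ hφ hφE).drawing = φ '' E.drawing := by
  simp only [drawing, map, image_union, image_iUnion, ← range_comp, Function.comp_def]

theorem cycleDrawing_map (w : G.Walk v₀ v₀) :
    cycleDrawing (E.map φ hφ hφE) w = φ '' cycleDrawing E w := by
  ext x
  constructor
  · rintro ⟨u, v, h, he, y, hy, rfl⟩
    exact ⟨y, ⟨u, v, h, he, hy⟩, rfl⟩
  · rintro ⟨y, ⟨u, v, h, he, hy⟩, rfl⟩
    exact ⟨u, v, h, he, y, hy, rfl⟩

end Map

section Paths

/-- The union of the arcs of the edges of a walk. The end point is listed separately so that the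
trivial walk is drawn as a point; hence the drawing always joins the ends of the walk. -/
def pathDrawing : ∀ {u v : V}, G.Walk u v → Set (ℝ × ℝ)
  | u, _, .nil => {E.pos u}
  | _, _, .cons h p => E.arc h ∪ pathDrawing p

theorem isCompact_pathDrawing (p : G.Walk u v) : IsCompact (E.pathDrawing p) := by
  induction p with
  | nil => exact isCompact_singleton
  | cons h p ih => exact (E.isCompact_arc h).union ih

theorem joinedIn_pathDrawing (p : G.Walk u v) :
    JoinedIn (E.pathDrawing p) (E.pos u) (E.pos v) := by
  induction p with
  | nil => exact .refl rfl
  | cons h p ih =>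
    exact ((E.joinedIn_arc h).mono subset_union_left).trans (ih.mono subset_union_right)

theorem mem_pathDrawing (p : G.Walk u v) {x : ℝ × ℝ} : x ∈ E.pathDrawing p ↔
    x = E.pos v ∨ ∃ (a b : V) (h : G.Adj a b), s(a, b) ∈ p.edges ∧ x ∈ E.arc h := by
  induction p with
  | nil => simp [pathDrawing]
  | cons h p ih =>
    rw [pathDrawing, mem_union, ih]
    constructor
    · rintro (hx | hx | ⟨a, b, h', he, hx⟩)
      · exact .inr ⟨_, _, h, by simp, hx⟩
      · exact .inl hx
      · exact .inr ⟨a, b, h', by simp [he], hx⟩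
    · rintro (hx | ⟨a, b, h', he, hx⟩)
      · exact .inr (.inl hx)
      · rcases List.mem_cons.1 (Walk.edges_cons h p ▸ he) with he | he
        · exact .inl (E.arc_eq_of_sym2_eq h h' he ▸ hx)
        · exact .inr (.inr ⟨a, b, h', he, hx⟩)

theorem exists_mem_support_of_mem_arc_inter_pathDrawing (h : G.Adj u v) (p : G.Walk a b)
    (he : s(u, v) ∉ p.edges) {x : ℝ × ℝ} (hx : x ∈ E.arc h) (hxp : x ∈ E.pathDrawing p) :
    ∃ y ∈ p.support, x = E.pos y ∧ (y = u ∨ y = v) := by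
  rcases (E.mem_pathDrawing p).1 hxp with rfl | ⟨c, d, h', he', hx'⟩
  · exact ⟨b, p.end_mem_support, rfl, E.pos_arc h b hx⟩
  · obtain ⟨-, rfl | rfl⟩ := E.arc_inter h h' (ne_of_mem_of_not_mem he' he).symm ⟨hx, hx'⟩
    · exact ⟨c, p.fst_mem_support_of_mem_edges he', rfl, E.pos_arc h c hx⟩
    · exact ⟨d, p.snd_mem_support_of_mem_edges he', rfl, E.pos_arc h d hx⟩

theorem hasContinuousLogs_pathDrawing {p : G.Walk u v} (hp : p.IsPath) :
    HasContinuousLogs (E.pathDrawing p) := by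
  induction p with
  | nil => exact hasContinuousLogs_of_starConvex (starConvex_singleton _) rfl
  | @cons a b c h p ih =>
    obtain ⟨hp, ha⟩ := (Walk.cons_isPath_iff h p).1 hp
    refine (E.hasContinuousLogs_arc h).union (ih hp) (E.isCompact_arc h).isClosed
      (E.isCompact_pathDrawing p).isClosed (c := E.pos b) (Subset.antisymm ?_ ?_)
    · rintro x ⟨hx, hxp⟩
      obtain ⟨y, hy, rfl, rfl | rfl⟩ := E.exists_mem_support_of_mem_arc_inter_pathDrawing h p
        (fun he ↦ ha (p.fst_mem_support_of_mem_edges he)) hx hxp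
      · exact absurd hy ha
      · rfl
    · exact singleton_subset_iff.2 ⟨E.right_mem_arc h, (E.joinedIn_pathDrawing p).source_mem⟩

end Paths

section Cycles

variable {w : G.Walk v₀ v₀} {D : Set (ℝ × ℝ)}

theorem cycleDrawing_eq_arc_union_pathDrawing (h : G.Adj u v) (p : G.Walk v u)
    (hp : ∀ e, e ∈ w.edges ↔ e = s(u, v) ∨ e ∈ p.edges) :
    cycleDrawing E w = E.arc h ∪ E.pathDrawing p := by
  ext x
  rw [mem_union, mem_pathDrawing]
  constructor
  · rintro ⟨a, b, h', he, hx⟩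
    rcases (hp _).1 he with he | he
    · exact .inl (E.arc_eq_of_sym2_eq h h' he ▸ hx)
    · exact .inr (.inr ⟨a, b, h', he, hx⟩)
  · rintro (hx | rfl | ⟨a, b, h', he, hx⟩)
    · exact ⟨u, v, h, (hp _).2 (.inl rfl), hx⟩
    · exact ⟨u, v, h, (hp _).2 (.inl rfl), E.left_mem_arc h⟩
    · exact ⟨a, b, h', (hp _).2 (.inr he), hx⟩

theorem pos_mem_cycleDrawing_iff (hw : w.IsCycle) :
    E.pos v ∈ cycleDrawing E w ↔ v ∈ w.support := by
  constructor
  · rintro ⟨a, b, h, he, hv⟩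
    rcases E.pos_arc h v hv with rfl | rfl
    · exact w.fst_mem_support_of_mem_edges he
    · exact w.snd_mem_support_of_mem_edges he
  · intro hv
    obtain ⟨e, he, hve⟩ := (Walk.mem_support_iff_exists_mem_edges_of_not_nil hw.not_nil).1 hv
    obtain ⟨u, rfl⟩ := Sym2.mem_iff_exists.1 hve
    exact ⟨v, u, w.adj_of_mem_edges he, he, E.left_mem_arc _⟩

theorem exists_isPath_cycleDrawing_eq (hw : w.IsCycle) (h : G.Adj u v) (he : s(u, v) ∈ w.edges) :
    ∃ p : G.Walk v u, p.IsPath ∧ cycleDrawing E w = E.arc h ∪ E.pathDrawing p ∧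
      E.arc h ∩ E.pathDrawing p ⊆ {E.pos u, E.pos v} := by
  obtain ⟨p, hpath, hnot, hp⟩ := exists_isPath_of_mem_edges_of_isCycle hw he
  refine ⟨p, hpath, E.cycleDrawing_eq_arc_union_pathDrawing h p hp, ?_⟩
  rintro x ⟨hx, hxp⟩
  obtain ⟨y, -, rfl, rfl | rfl⟩ :=
    E.exists_mem_support_of_mem_arc_inter_pathDrawing h p hnot hx hxp
  exacts [.inl rfl, .inr rfl]

theorem isCompact_cycleDrawing (hw : w.IsCycle) : IsCompact (cycleDrawing E w) := by
  have h := w.adj_snd hw.not_nil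
  obtain ⟨p, -, hC, -⟩ := E.exists_isPath_cycleDrawing_eq hw h (w.mk_start_snd_mem_edges hw.not_nil)
  exact hC ▸ (E.isCompact_arc h).union (E.isCompact_pathDrawing p)

theorem not_isPreconnected_compl_cycleDrawing (hw : w.IsCycle) :
    ¬ IsPreconnected (cycleDrawing E w)ᶜ := by
  have h := w.adj_snd hw.not_nil
  obtain ⟨p, -, hC, hinter⟩ :=
    E.exists_isPath_cycleDrawing_eq hw h (w.mk_start_snd_mem_edges hw.not_nil)
  rw [hC]
  exact not_isPreconnected_compl_union (E.pos_inj.ne h.ne) (E.isCompact_arc h).isClosed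
    (E.isCompact_pathDrawing p).isClosed (E.joinedIn_arc h) (E.joinedIn_pathDrawing p).symm hinter

theorem arc_subset_frontier_region (hw : w.IsCycle) (hD : IsRegion (cycleDrawing E w) D)
    (h : G.Adj u v) (he : s(u, v) ∈ w.edges) : E.arc h ⊆ frontier D := by
  obtain ⟨p, hpath, hC, hinter⟩ := E.exists_isPath_cycleDrawing_eq hw h he
  obtain ⟨f, hf, hinj, h0, h1, himage⟩ := E.arc_curve h
  rw [hC] at hD
  rw [← himage] at hD hinter ⊢
  have hends := E.joinedIn_pathDrawing p
  refine image_Icc_subset_frontier_region hf hinj (E.isCompact_pathDrawing p)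
    (E.hasContinuousLogs_pathDrawing hpath) (h0 ▸ hends.target_mem) (h1 ▸ hends.source_mem)
    (fun t ht htp ↦ ?_) hD
  have ht' := Ioo_subset_Icc_self ht
  rcases hinter ⟨mem_image_of_mem f ht', htp⟩ with heq | heq
  · exact ht.1.ne' (hinj ht' unitInterval.zero_mem (heq.trans h0.symm))
  · exact ht.2.ne (hinj ht' unitInterval.one_mem (heq.trans h1.symm))

theorem isJordanSeparating_cycleDrawing (hw : w.IsCycle) :
    IsJordanSeparating (cycleDrawing E w) where
  isClosed := (E.isCompact_cycleDrawing hw).isClosed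
  not_isPreconnected_compl := E.not_isPreconnected_compl_cycleDrawing hw
  frontier_eq D hD := by
    refine (hD.frontier_subset (E.isCompact_cycleDrawing hw).isClosed).antisymm ?_
    rintro x ⟨u, v, h, he, hx⟩
    exact E.arc_subset_frontier_region hw hD h he hx

theorem arc_subset_region_union_cycleDrawing (hw : w.IsCycle)
    (hD : IsRegion (cycleDrawing E w) D) (h : G.Adj u v) (hne : (E.arc h ∩ D).Nonempty) :
    E.arc h ⊆ D ∪ cycleDrawing E w := by
  have hC := (E.isCompact_cycleDrawing hw).isClosed
  have hsdiff : E.arc h \ {E.pos u, E.pos v} ⊆ (cycleDrawing E w)ᶜ := by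
    rintro x ⟨hx, hxuv⟩ ⟨a, b, h', he, hx'⟩
    obtain ⟨y, hy, hyD⟩ := hne
    have hne : s(u, v) ≠ s(a, b) := fun heq ↦
      hD.subset_compl hyD ⟨u, v, h, heq ▸ he, hy⟩
    exact hxuv (E.arc_inter h h' hne ⟨hx, hx'⟩).1
  have hmeets : ((E.arc h \ {E.pos u, E.pos v}) ∩ D).Nonempty := by
    obtain ⟨y, hy, hyD⟩ := hne
    rw [inter_comm]
    exact mem_closure_iff.1 (E.arc_subset_closure_sdiff h hy) D (hD.isOpen hC) hyD
  calc E.arc h ⊆ closure (E.arc h \ {E.pos u, E.pos v}) := E.arc_subset_closure_sdiff h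
    _ ⊆ closure D := closure_mono <|
      hD.subset_of_isPreconnected (E.isPreconnected_arc_sdiff h) hsdiff hmeets
    _ ⊆ D ∪ cycleDrawing E w := hD.closure_subset hC

end Cycles

section FaceBoundary

variable {x : V} {w : G.Walk v₀ v₀} {D : Set (ℝ × ℝ)}

theorem cycleDrawing_subset_region_union {w' : G.Walk x x} (hw : w.IsCycle)
    (hchord : w.IsChordless) (hD : IsRegion (cycleDrawing E w) D)
    (hw' : ∀ v ∈ w'.support, E.pos v ∈ D ∪ cycleDrawing E w) :
    cycleDrawing E w' ⊆ D ∪ cycleDrawing E w := by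
  rintro p ⟨a, b, h, he, hp⟩
  by_cases hne : (E.arc h ∩ D).Nonempty
  · exact E.arc_subset_region_union_cycleDrawing hw hD h hne hp
  · have hmem : ∀ v, E.pos v ∈ E.arc h → v ∈ w'.support → v ∈ w.support := fun v hv hvw' ↦
      (E.pos_mem_cycleDrawing_iff hw).1 ((hw' v hvw').resolve_left fun hvD ↦ hne ⟨_, hv, hvD⟩)
    refine .inr ⟨a, b, h, hchord.mem_edges ?_ ?_ h, hp⟩
    · exact hmem a (E.left_mem_arc h) (w'.fst_mem_support_of_mem_edges he)
    · exact hmem b (E.right_mem_arc h) (w'.snd_mem_support_of_mem_edges he)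

theorem exists_isCycle_isChordless_in_region (hG : G.IsBiconnected) (hw : w.IsCycle)
    (hD : IsRegion (cycleDrawing E w) D) (hx : E.pos x ∈ D) :
    ∃ w' : G.Walk x x, w'.IsCycle ∧ w'.IsChordless ∧
      ∀ v ∈ w'.support, E.pos v ∈ D ∪ cycleDrawing E w := by
  let S : Set V := {v | E.pos v ∈ D ∪ cycleDrawing E w}
  let T : Set V := {v | v ∈ w.support}
  have hTS : T ⊆ S := fun v hv ↦ .inr ((E.pos_mem_cycleDrawing_iff hw).2 hv)
  have hxT : x ∉ T := fun h ↦ hD.subset_compl hx ((E.pos_mem_cycleDrawing_iff hw).2 h)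
  have hTU : T ⊆ {v | v ≠ x} := fun v hv hvx ↦ hxT (hvx ▸ hv)
  have hadj : ∀ a, E.pos a ∈ D → ∀ b, G.Adj a b → b ∈ S := fun a ha b hab ↦
    E.arc_subset_region_union_cycleDrawing hw hD hab ⟨_, E.left_mem_arc hab, ha⟩
      (E.right_mem_arc hab)
  have hadj' : ∀ a ∈ S \ T, ∀ b, G.Adj a b → b ∈ S := fun a ha ↦
    hadj a (ha.1.resolve_right fun h ↦ ha.2 ((E.pos_mem_cycleDrawing_iff hw).1 h))
  obtain ⟨u, v, huv, hxu, hxv⟩ := exists_adj_adj_ne_of_isBiconnected hG x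
  exact exists_isCycle_isChordless_of_preconnected_induce (.inl hx) (hadj x hx u hxu)
    (hadj x hx v hxv) hxu hxv huv
    (preconnected_induce_inter hTS hTU w.connected_induce_support (hG.2.2 x).preconnected hadj')

theorem exists_smaller_region (hG : G.IsBiconnected) (hw : w.IsCycle) (hchord : w.IsChordless)
    (hD : IsRegion (cycleDrawing E w) D) (hx : E.pos x ∈ D) :
    ∃ (w' : G.Walk x x) (D' : Set (ℝ × ℝ)), w'.IsCycle ∧ w'.IsChordless ∧
      IsRegion (cycleDrawing E w') D' ∧ E.pos ⁻¹' D' ⊂ E.pos ⁻¹' D := by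
  obtain ⟨w', hw', hchord', hsupport⟩ := E.exists_isCycle_isChordless_in_region hG hw hD hx
  have hC := E.isJordanSeparating_cycleDrawing hw
  have hC' := E.isJordanSeparating_cycleDrawing hw'
  have hxC' : E.pos x ∈ cycleDrawing E w' :=
    (E.pos_mem_cycleDrawing_iff hw').2 w'.start_mem_support
  have hne : (cycleDrawing E w \ cycleDrawing E w').Nonempty := by
    rw [sdiff_nonempty]
    exact fun hsub ↦ hD.subset_compl hx (hC.eq_of_subset hC' hsub ▸ hxC')
  obtain ⟨D', hD', hD'D⟩ := hC.exists_region_subset hD hC'.not_isPreconnected_compl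
    (E.cycleDrawing_subset_region_union hw hchord hD hsupport) hne
  exact ⟨w', D', hw', hchord', hD', preimage_mono hD'D,
    fun hsub ↦ hD'.subset_compl (hsub hx) hxC'⟩

theorem exists_chordless_cycle_region_without_vertices (hG : G.IsBiconnected) :
    ∃ (v₀ : V) (w : G.Walk v₀ v₀) (D : Set (ℝ × ℝ)), w.IsCycle ∧ w.IsChordless ∧
      IsRegion (cycleDrawing E w) D ∧ E.pos ⁻¹' D = ∅ := by
  have : Finite V := Nat.finite_of_card_ne_zero (by have := hG.1; lia)
  let IsVertexSet : Set V → Prop := fun S ↦ ∃ (v₀ : V) (w : G.Walk v₀ v₀) (D : Set (ℝ × ℝ)),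
    w.IsCycle ∧ w.IsChordless ∧ IsRegion (cycleDrawing E w) D ∧ E.pos ⁻¹' D = S
  have hexists : ∃ S, IsVertexSet S := by
    obtain ⟨x⟩ := hG.2.1.nonempty
    obtain ⟨u, v, huv, hxu, hxv⟩ := exists_adj_adj_ne_of_isBiconnected hG x
    obtain ⟨w, hw, hchord, -⟩ := exists_isCycle_isChordless_of_preconnected_induce
      (mem_univ x) (mem_univ u) (mem_univ v) hxu hxv huv (by
        rw [univ_inter]
        exact (hG.2.2 x).preconnected)
    obtain ⟨D, hD⟩ := (E.isJordanSeparating_cycleDrawing hw).exists_region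
    exact ⟨_, x, w, D, hw, hchord, hD, rfl⟩
  obtain ⟨S, hS⟩ := exists_minimal_of_wellFoundedLT IsVertexSet hexists
  obtain ⟨v₀, w, D, hw, hchord, hD, rfl⟩ := hS.prop
  refine ⟨v₀, w, D, hw, hchord, hD, ?_⟩
  by_contra! hne
  obtain ⟨x, hx⟩ := hne
  obtain ⟨w', D', hw', hchord', hD', hlt⟩ := E.exists_smaller_region hG hw hchord hD hx
  exact hS.not_prop_of_lt hlt ⟨x, w', D', hw', hchord', hD', rfl⟩

theorem isFace_of_region_without_vertices (hw : w.IsCycle) (hchord : w.IsChordless)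
    (hD : IsRegion (cycleDrawing E w) D) (hempty : E.pos ⁻¹' D = ∅) : E.IsFace D := by
  have hC := (E.isCompact_cycleDrawing hw).isClosed
  have hnotMem : ∀ v, E.pos v ∉ D := fun v hv ↦ hempty.subset hv
  have hcompl : D ⊆ E.drawingᶜ := by
    rintro y hy (⟨v, rfl⟩ | hyE)
    · exact hnotMem v hy
    · obtain ⟨u, v, h, hyarc⟩ : ∃ (u v : V) (h : G.Adj u v), y ∈ E.arc h := by
        simpa only [mem_iUnion] using hyE
      have harc := E.arc_subset_region_union_cycleDrawing hw hD h ⟨y, hyarc, hy⟩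
      have hmem : ∀ a, E.pos a ∈ E.arc h → a ∈ w.support := fun a ha ↦
        (E.pos_mem_cycleDrawing_iff hw).1 ((harc ha).resolve_left (hnotMem a))
      have he := hchord.mem_edges (hmem u (E.left_mem_arc h)) (hmem v (E.right_mem_arc h)) h
      exact hD.subset_compl hy ⟨u, v, h, he, hyarc⟩
  exact IsRegion.of_frontier_subset (hD.isOpen hC) hD.isPreconnected hD.nonempty hcompl
    ((hD.frontier_subset hC).trans (E.cycleDrawing_subset_drawing w))

theorem exists_isFace_frontier_eq_chordless_cycle (hG : G.IsBiconnected) :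
    ∃ (v₀ : V) (w : G.Walk v₀ v₀) (D : Set (ℝ × ℝ)), w.IsCycle ∧ w.IsChordless ∧
      E.IsFace D ∧ frontier D = cycleDrawing E w := by
  obtain ⟨v₀, w, D, hw, hchord, hD, hempty⟩ :=
    E.exists_chordless_cycle_region_without_vertices hG
  exact ⟨v₀, w, D, hw, hchord, E.isFace_of_region_without_vertices hw hchord hD hempty,
    (E.isJordanSeparating_cycleDrawing hw).frontier_eq D hD⟩

theorem exists_embedding_unbounded_face_of_isFace [Finite V] (hD : E.IsFace D)
    (hfrontier : frontier D = cycleDrawing E w) :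
    ∃ (E' : PlaneEmbedding G) (F : Set (ℝ × ℝ)), E'.IsFace F ∧ ¬ Bornology.IsBounded F ∧
      frontier F = cycleDrawing E' w := by
  by_cases hb : Bornology.IsBounded D
  · have hregion : IsRegion E.drawing D := hD
    have hDo := hregion.isOpen E.isClosed_drawing
    obtain ⟨p, hp⟩ := hregion.nonempty
    have hφE : ContinuousOn (unitInversion p) E.drawing :=
      (continuousOn_unitInversion p).mono fun x hx hxp ↦ hregion.subset_compl hp (hxp ▸ hx)
    have hφ := (unitInversion_involutive p).injective
    have hrank : 1 < Module.rank ℝ (ℝ × ℝ) := by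
      rw [rank_prod', Module.rank_self, one_add_one_eq_two]
      exact Cardinal.one_lt_two
    refine ⟨E.map (unitInversion p) hφ hφE, unitInversion p '' (D \ {p}), ?_,
      not_isBounded_image_unitInversion (hDo.mem_nhds hp), ?_⟩
    · change IsRegion _ _
      rw [drawing_map]
      exact hregion.image_unitInversion hrank E.isClosed_drawing hb hp
    · rw [frontier_image_unitInversion hDo hb hp, hfrontier, cycleDrawing_map]
  · exact ⟨E, D, hD, hb, hfrontier⟩

end FaceBoundary

end PlaneEmbedding

/-- Every (biconnected) planar graph admits a planar drawing in which
the cycle bounding the outer face has no chords. -/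
theorem planar_drawing_chordless_outerface {V : Type u} (G : SimpleGraph V)
    (hbic : G.IsBiconnected) (hplanar : G.IsPlanar) :
    ∃ (E : PlaneEmbedding G) (v0 : V) (w : G.Walk v0 v0), w.IsCycle ∧
      (∃ F : Set (ℝ × ℝ), E.IsFace F ∧ ¬ Bornology.IsBounded F ∧
        frontier F = cycleDrawing E w) ∧
      (∀ u v : V, u ∈ w.support → v ∈ w.support → G.Adj u v → s(u, v) ∈ w.edges) := by
  obtain ⟨E⟩ := hplanar
  have : Finite V := Nat.finite_of_card_ne_zero (by have := hbic.1; lia)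
  obtain ⟨v₀, w, D, hw, hchord, hD, hfrontier⟩ :=
    E.exists_isFace_frontier_eq_chordless_cycle hbic
  obtain ⟨E', F, hF, hunbounded, hfrontier'⟩ :=
    E.exists_embedding_unbounded_face_of_isFace hD hfrontier
  exact ⟨E', v₀, w, hw, ⟨F, hF, hunbounded, hfrontier'⟩, fun _ _ ↦ hchord.mem_edges⟩
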